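/- Let F₂ be the free group on two generators a, b, let σ be the automorphism of F₂ with σ(a) = a⁻¹ and σ(b) = b⁻¹, and let G = F₂ ⋊ C₂ be the semidirect product in which the nontrivial element of the cyclic group C₂ of order two acts on F₂ as σ. Then the subgroup F₂ (the kernel of the projection G → C₂) is characteristic in G, i.e. every automorphism of G maps this subgroup onto itself. -/

import Mathlib

/-!
The kernel `N` has index two and no element of order two, so all involutions of `N ⋊ C₂` lie outside
`N` and the product of any two of them lies in `N`. Conversely, let `c` generate `C₂`: for each of
the generators `n` of `N` inverted by `c`, the pair `(n, c)` is an involution and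
`(n, c) * (1, c) = n`. Hence `N` is the subgroup generated by the products of two involutions, a
description which every automorphism respects.
-/

open Subgroup

theorem orderOf_le_one_of_isMulTorsionFree {M : Type*} [Monoid M] [IsMulTorsionFree M] (a : M) :
    orderOf a ≤ 1 := by
  obtain rfl | ha := eq_or_ne a 1
  · exact orderOf_one.le
  · exact (orderOf_eq_zero (not_isOfFinOrder_of_isMulTorsionFree ha)).trans_le zero_le_one

section InvolutionProducts

variable {G : Type*} [Group G]

theorem characteristic_closure_of_forall_mulEquiv_mem {S : Set G}
    (hS : ∀ e : G ≃* G, ∀ x ∈ S, e x ∈ S) : (closure S).Characteristic :=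
  characteristic_iff_le_comap.2 fun e =>
    (closure_le _).2 fun x hx => subset_closure (hS e x hx)

variable (G) in
/-- The subgroup of `G` generated by the products of two involutions. The two involutions may
coincide, which only adds the generator `1`. -/
def involutionProductSubgroup : Subgroup G :=
  closure {g | ∃ x y : G, orderOf x = 2 ∧ orderOf y = 2 ∧ x * y = g}

theorem mul_mem_involutionProductSubgroup {x y : G} (hx : orderOf x = 2) (hy : orderOf y = 2) :
    x * y ∈ involutionProductSubgroup G :=
  subset_closure ⟨x, y, hx, hy, rfl⟩

instance characteristic_involutionProductSubgroup :
    (involutionProductSubgroup G).Characteristic := by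
  refine characteristic_closure_of_forall_mulEquiv_mem ?_
  rintro e _ ⟨x, y, hx, hy, rfl⟩
  exact ⟨e x, e y, (e.orderOf_eq x).trans hx, (e.orderOf_eq y).trans hy, (map_mul e x y).symm⟩

theorem involutionProductSubgroup_le_of_index_eq_two {H : Subgroup G} (hH : H.index = 2)
    (horder : ∀ x ∈ H, orderOf x ≠ 2) : involutionProductSubgroup G ≤ H := by
  rw [involutionProductSubgroup, closure_le]
  rintro _ ⟨x, y, hx, hy, rfl⟩
  have hxH : x ∉ H := fun h => horder x h hx
  have hyH : y ∉ H := fun h => horder y h hy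
  exact (mul_mem_iff_of_index_two hH).2 (iff_of_false hxH hyH)

end InvolutionProducts

section SemidirectProduct

open SemidirectProduct

variable {N C : Type*} [Group N] [Group C] {φ : C →* MulAut N}

theorem index_ker_rightHom : (rightHom : N ⋊[φ] C →* C).ker.index = Nat.card C := by
  rw [index_ker, MonoidHom.range_eq_top.2 rightHom_surjective, card_top]

theorem orderOf_semidirectProduct_mk_eq_two {n : N} {c : C} (hc : orderOf c = 2)
    (hn : φ c n = n⁻¹) : orderOf (⟨n, c⟩ : N ⋊[φ] C) = 2 := by
  obtain ⟨hsq, hne⟩ := orderOf_eq_prime_iff.1 hc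
  refine orderOf_eq_prime_iff.2 ⟨?_, fun h => hne (congrArg right h)⟩
  ext
  · simp [sq, hn]
  · simpa [sq] using hsq

theorem inl_mem_involutionProductSubgroup {n : N} {c : C} (hc : orderOf c = 2)
    (hn : φ c n = n⁻¹) : (inl n : N ⋊[φ] C) ∈ involutionProductSubgroup (N ⋊[φ] C) := by
  have hmul : (⟨n, c⟩ * ⟨1, c⟩ : N ⋊[φ] C) = inl n := by
    ext
    · simp
    · simpa [sq] using (orderOf_eq_prime_iff.1 hc).1
  rw [← hmul]
  exact mul_mem_involutionProductSubgroup (orderOf_semidirectProduct_mk_eq_two hc hn)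
    (orderOf_semidirectProduct_mk_eq_two hc (by simp))

theorem ker_rightHom_le_involutionProductSubgroup {c : C} (hc : orderOf c = 2) {S : Set N}
    (hS : closure S = ⊤) (hinv : ∀ s ∈ S, φ c s = s⁻¹) :
    (rightHom : N ⋊[φ] C →* C).ker ≤ involutionProductSubgroup (N ⋊[φ] C) := by
  rw [← range_inl_eq_ker_rightHom, MonoidHom.range_eq_map, ← hS, map_le_iff_le_comap, closure_le]
  exact fun s hs => inl_mem_involutionProductSubgroup hc (hinv s hs)

theorem involutionProductSubgroup_le_ker_rightHom (hC : Nat.card C = 2)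
    (hN : ∀ n : N, orderOf n ≠ 2) :
    involutionProductSubgroup (N ⋊[φ] C) ≤ (rightHom : N ⋊[φ] C →* C).ker := by
  refine involutionProductSubgroup_le_of_index_eq_two (index_ker_rightHom.trans hC) ?_
  rw [← range_inl_eq_ker_rightHom]
  rintro _ ⟨n, rfl⟩
  rw [orderOf_injective inl inl_injective]
  exact hN n

theorem kernel_characteristic_in_F2_semidirect_C2_general (hC : Nat.card C = 2)
    (hN : ∀ n : N, orderOf n ≠ 2) {c : C} (hc : orderOf c = 2) {S : Set N}
    (hS : closure S = ⊤) (hinv : ∀ s ∈ S, φ c s = s⁻¹) :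
    (rightHom : N ⋊[φ] C →* C).ker.Characteristic := by
  rw [le_antisymm (ker_rightHom_le_involutionProductSubgroup hc hS hinv)
    (involutionProductSubgroup_le_ker_rightHom hC hN)]
  infer_instance

end SemidirectProduct

/-- Let `F₂` be free on `a, b`, `σ` the automorphism with `σ a = a⁻¹`, `σ b = b⁻¹`
(an automorphism of order two), and `G = F₂ ⋊ C₂` the semidirect product in which the
nontrivial element of `C₂` acts as `σ`. Then the subgroup `F₂` (the kernel of the
projection `G → C₂`) is characteristic in `G`. -/
theorem kernel_characteristic_in_F2_semidirect_C2 (σ : MulAut (FreeGroup (Fin 2)))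
    (h0 : σ (FreeGroup.of 0) = (FreeGroup.of 0)⁻¹)
    (h1 : σ (FreeGroup.of 1) = (FreeGroup.of 1)⁻¹)
    (ψ : Multiplicative (ZMod 2) →* MulAut (FreeGroup (Fin 2)))
    (hψ : ψ (Multiplicative.ofAdd 1) = σ) :
    (SemidirectProduct.rightHom :
        FreeGroup (Fin 2) ⋊[ψ] Multiplicative (ZMod 2) →* Multiplicative (ZMod 2)).ker.Characteristic := by
  refine kernel_characteristic_in_F2_semidirect_C2_general (Nat.card_zmod 2)
    (fun w => ((orderOf_le_one_of_isMulTorsionFree w).trans_lt one_lt_two).ne)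
    (c := Multiplicative.ofAdd 1) ((orderOf_ofAdd_eq_addOrderOf 1).trans (ZMod.addOrderOf_one 2))
    (FreeGroup.closure_range_of _) ?_
  rw [Set.forall_mem_range, Fin.forall_fin_two, hψ]
  exact ⟨h0, h1⟩
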